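/- arXiv:1010.3492 — 2 statements merged into one kernel-verified Lean document; each statement's English description precedes it below -/
import Mathlib

section
/- Let g, h be smooth nowhere-vanishing real functions of θ on an open interval I, let K be a smooth function on I with K′ = h/g, let α ∈ ℂ, and set i = √(−1), F = (g(θ) p_θ − i h(θ) p_φ)². Define the complex bivector π′ on ℝ × I × ℝ² by {φ,θ}_{π′} = −(g(θ)/(2h(θ))) ∂F/∂p_φ, {φ,p_φ}_{π′} = α e^{iφ − K(θ)}, {φ,p_θ}_{π′} = −(i/2)(∂F/∂θ + (2h(θ)/g(θ)) F), {θ,p_φ}_{π′} = 0, {θ,p_θ}_{π′} = F + α e^{iφ − K(θ)}, {p_φ,p_θ}_{π′} = α e^{iφ − K(θ)}(−K′(θ) p_φ − i p_θ). Then π′ is a Poisson bivector compatible with the canonical bivector P. -/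
open Real Complex

/-- Partial derivative of a complex-valued function in the `i`-th coordinate
direction on `ℝ⁴` (coordinates `z 0 = φ`, `z 1 = θ`, `z 2 = p_φ`, `z 3 = p_θ`). -/
noncomputable def pdC (i : Fin 4) (F : (Fin 4 → ℝ) → ℂ) (z : Fin 4 → ℝ) : ℂ :=
  fderiv ℝ F z (Pi.single i 1)

/-- The Poisson bracket of complex-valued `F` and `G` defined by a complex bivector. -/
noncomputable def pbivC (Pv : (Fin 4 → ℝ) → Matrix (Fin 4) (Fin 4) ℂ)
    (F G : (Fin 4 → ℝ) → ℂ) (z : Fin 4 → ℝ) : ℂ :=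
  ∑ i : Fin 4, ∑ j : Fin 4, Pv z i j * pdC i F z * pdC j G z

/-- A complex bivector satisfies the Jacobi identity (is a Poisson bivector) on `U`. -/
def IsPoissonOnC (Pv : (Fin 4 → ℝ) → Matrix (Fin 4) (Fin 4) ℂ)
    (U : Set (Fin 4 → ℝ)) : Prop :=
  ∀ z ∈ U, ∀ i j k : Fin 4,
    (∑ l : Fin 4, (Pv z l i * pdC l (fun w => Pv w j k) z
      + Pv z l j * pdC l (fun w => Pv w k i) z
      + Pv z l k * pdC l (fun w => Pv w i j) z)) = 0

/-- The antisymmetric complex matrix with the given upper-triangular entries: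
`a = {φ,θ}`, `b = {φ,p_φ}`, `c = {φ,p_θ}`, `d = {θ,p_φ}`, `e = {θ,p_θ}`, `f = {p_φ,p_θ}`. -/
noncomputable def skewC (a b c d e f : ℂ) : Matrix (Fin 4) (Fin 4) ℂ :=
  !![0, a, b, c; -a, 0, d, e; -b, -d, 0, f; -c, -e, -f, 0]

/-- The canonical Poisson bivector (as a complex matrix):
`{φ,p_φ} = {θ,p_θ} = 1`, all other coordinate brackets zero. -/
noncomputable def PcanC : Matrix (Fin 4) (Fin 4) ℂ :=
  !![0, 0, 1, 0; 0, 0, 0, 1; -1, 0, 0, 0; 0, -1, 0, 0]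

/-- `F = (g(θ) p_θ − i h(θ) p_φ)²`. -/
noncomputable def Fgh (g h : ℝ → ℝ) (z : Fin 4 → ℝ) : ℂ :=
  ((g (z 1) : ℂ) * (z 3 : ℂ) - Complex.I * (h (z 1) : ℂ) * (z 2 : ℂ)) ^ 2

/-- The complex bivector `π′` with entries
`{φ,θ} = −(g/(2h)) ∂F/∂p_φ`, `{φ,p_φ} = α e^{iφ−K(θ)}`,
`{φ,p_θ} = −(i/2)(∂F/∂θ + (2h/g) F)`, `{θ,p_φ} = 0`, `{θ,p_θ} = F + α e^{iφ−K(θ)}`,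
`{p_φ,p_θ} = α e^{iφ−K(θ)}(−K′(θ) p_φ − i p_θ)` with `K′ = h/g`. -/
noncomputable def piGor (g h K : ℝ → ℝ) (α : ℂ) (z : Fin 4 → ℝ) :
    Matrix (Fin 4) (Fin 4) ℂ :=
  skewC
    (-((g (z 1) / (2 * h (z 1)) : ℝ) : ℂ) * pdC 2 (Fgh g h) z)
    (α * Complex.exp (Complex.I * (z 0 : ℂ) - (K (z 1) : ℂ)))
    (-(Complex.I / 2) * (pdC 1 (Fgh g h) z + ((2 * h (z 1) / g (z 1) : ℝ) : ℂ) * Fgh g h z))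
    0
    (Fgh g h z + α * Complex.exp (Complex.I * (z 0 : ℂ) - (K (z 1) : ℂ)))
    (α * Complex.exp (Complex.I * (z 0 : ℂ) - (K (z 1) : ℂ)) *
      (-((h (z 1) / g (z 1) : ℝ) : ℂ) * (z 2 : ℂ) - Complex.I * (z 3 : ℂ)))

/-!
Write `q = g p_θ − i h p_φ` and `E = α e^{iφ − K}`, so that `F = q²`,
`dq = q_θ dθ − i h dp_φ + g dp_θ` and `dE = E (i dφ − (h/g) dθ)`. Every bivector of the pencil
`s P + π′` then has the entries `{φ,θ} = i g q`, `{φ,p_φ} = s + E`,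
`{φ,p_θ} = −i q (q_θ + (h/g) q)`, `{θ,p_φ} = 0`, `{θ,p_θ} = s + q² + E`, `{p_φ,p_θ} = −i E q / g`.
As the Jacobiator of a skew bivector is totally antisymmetric, only four of its components matter,
and these vanish identically in `s`: the value `s = 0` is the Jacobi identity of `π′`, the value
`s = 1` its compatibility with `P`.
-/

section Jacobiator

variable {Pv Qv : (Fin 4 → ℝ) → Matrix (Fin 4) (Fin 4) ℂ} {U : Set (Fin 4 → ℝ)}
  {z : Fin 4 → ℝ} {i j k : Fin 4}

/-- The Jacobi expression of `Pv` on the coordinates `z i`, `z j`, `z k`; it vanishes on `U` exactly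
when `Pv` is a Poisson bivector there. -/
noncomputable def jacobiator (Pv : (Fin 4 → ℝ) → Matrix (Fin 4) (Fin 4) ℂ) (i j k : Fin 4)
    (z : Fin 4 → ℝ) : ℂ :=
  ∑ l : Fin 4, (Pv z l i * pdC l (fun w => Pv w j k) z
    + Pv z l j * pdC l (fun w => Pv w k i) z
    + Pv z l k * pdC l (fun w => Pv w i j) z)

theorem pdC_neg (i : Fin 4) (f : (Fin 4 → ℝ) → ℂ) (z : Fin 4 → ℝ) :
    pdC i (fun w => -f w) z = -pdC i f z := by
  simp [pdC, fderiv_fun_neg]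

theorem pdC_congr {f f' : (Fin 4 → ℝ) → ℂ} (h : f =ᶠ[nhds z] f') (i : Fin 4) :
    pdC i f z = pdC i f' z := by
  simp only [pdC, h.fderiv_eq]

theorem jacobiator_rotate : jacobiator Pv i j k z = jacobiator Pv j k i z :=
  Finset.sum_congr rfl fun _ _ => by ring

theorem pdC_entry_swap (hP : ∀ w, (Pv w).transpose = -Pv w) (i j l : Fin 4) :
    pdC l (Pv · j i) z = -pdC l (Pv · i j) z := by
  rw [← pdC_neg]
  exact congrArg (pdC l · z) (funext fun w => congrFun₂ (hP w) i j)

theorem jacobiator_swap (hP : ∀ w, (Pv w).transpose = -Pv w) :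
    jacobiator Pv j i k z = -jacobiator Pv i j k z := by
  rw [jacobiator, jacobiator, ← Finset.sum_neg_distrib]
  refine Finset.sum_congr rfl fun l _ => ?_
  rw [pdC_entry_swap hP i k, pdC_entry_swap hP k j, pdC_entry_swap hP j i]
  ring

theorem jacobiator_self (hP : ∀ w, (Pv w).transpose = -Pv w) : jacobiator Pv i i k z = 0 :=
  self_eq_neg.mp (jacobiator_swap hP)

theorem isPoissonOnC_of_jacobiator_lt (hP : ∀ w, (Pv w).transpose = -Pv w)
    (hJ : ∀ z ∈ U, ∀ i j k, i < j → j < k → jacobiator Pv i j k z = 0) :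
    IsPoissonOnC Pv U := by
  intro z hz i j k
  change jacobiator Pv i j k z = 0
  grind [jacobiator_rotate, jacobiator_swap hP, jacobiator_self hP, hJ z hz]

theorem IsPoissonOnC.congr (hP : IsPoissonOnC Pv U) (hU : IsOpen U) (h : Set.EqOn Qv Pv U) :
    IsPoissonOnC Qv U := by
  intro z hz i j k
  have pdC_entry (l p q : Fin 4) :
      pdC l (fun w => Qv w p q) z = pdC l (fun w => Pv w p q) z :=
    pdC_congr (Filter.eventuallyEq_of_mem (hU.mem_nhds hz) fun w hw => congrFun₂ (h hw) p q) l
  simpa only [h hz, pdC_entry] using hP z hz i j k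

theorem isPoissonOnC_of_transpose_eq_neg (hP : ∀ w, (Pv w).transpose = -Pv w)
    (h012 : ∀ z ∈ U,
      -(Pv z 0 1 * pdC 1 (Pv · 1 2) z + Pv z 0 2 * pdC 2 (Pv · 1 2) z
        + Pv z 0 3 * pdC 3 (Pv · 1 2) z)
      - (Pv z 0 1 * pdC 0 (Pv · 0 2) z - Pv z 1 2 * pdC 2 (Pv · 0 2) z
        - Pv z 1 3 * pdC 3 (Pv · 0 2) z)
      + (Pv z 0 2 * pdC 0 (Pv · 0 1) z + Pv z 1 2 * pdC 1 (Pv · 0 1) z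
        - Pv z 2 3 * pdC 3 (Pv · 0 1) z) = 0)
    (h013 : ∀ z ∈ U,
      -(Pv z 0 1 * pdC 1 (Pv · 1 3) z + Pv z 0 2 * pdC 2 (Pv · 1 3) z
        + Pv z 0 3 * pdC 3 (Pv · 1 3) z)
      - (Pv z 0 1 * pdC 0 (Pv · 0 3) z - Pv z 1 2 * pdC 2 (Pv · 0 3) z
        - Pv z 1 3 * pdC 3 (Pv · 0 3) z)
      + (Pv z 0 3 * pdC 0 (Pv · 0 1) z + Pv z 1 3 * pdC 1 (Pv · 0 1) z
        + Pv z 2 3 * pdC 2 (Pv · 0 1) z) = 0)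
    (h023 : ∀ z ∈ U,
      -(Pv z 0 1 * pdC 1 (Pv · 2 3) z + Pv z 0 2 * pdC 2 (Pv · 2 3) z
        + Pv z 0 3 * pdC 3 (Pv · 2 3) z)
      - (Pv z 0 2 * pdC 0 (Pv · 0 3) z + Pv z 1 2 * pdC 1 (Pv · 0 3) z
        - Pv z 2 3 * pdC 3 (Pv · 0 3) z)
      + (Pv z 0 3 * pdC 0 (Pv · 0 2) z + Pv z 1 3 * pdC 1 (Pv · 0 2) z
        + Pv z 2 3 * pdC 2 (Pv · 0 2) z) = 0)
    (h123 : ∀ z ∈ U,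
      (Pv z 0 1 * pdC 0 (Pv · 2 3) z - Pv z 1 2 * pdC 2 (Pv · 2 3) z
        - Pv z 1 3 * pdC 3 (Pv · 2 3) z)
      - (Pv z 0 2 * pdC 0 (Pv · 1 3) z + Pv z 1 2 * pdC 1 (Pv · 1 3) z
        - Pv z 2 3 * pdC 3 (Pv · 1 3) z)
      + (Pv z 0 3 * pdC 0 (Pv · 1 2) z + Pv z 1 3 * pdC 1 (Pv · 1 2) z
        + Pv z 2 3 * pdC 2 (Pv · 1 2) z) = 0) :
    IsPoissonOnC Pv U := by
  refine isPoissonOnC_of_jacobiator_lt hP fun z hz i j k hij hjk => ?_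
  have entry_swap (p q : Fin 4) : Pv z q p = -Pv z p q := congrFun₂ (hP z) p q
  have entry_diag (p : Fin 4) : Pv z p p = 0 := self_eq_neg.mp (entry_swap p p)
  obtain ⟨rfl, rfl, rfl⟩ | ⟨rfl, rfl, rfl⟩ | ⟨rfl, rfl, rfl⟩ | ⟨rfl, rfl, rfl⟩ :
      i = 0 ∧ j = 1 ∧ k = 2 ∨ i = 0 ∧ j = 1 ∧ k = 3 ∨ i = 0 ∧ j = 2 ∧ k = 3 ∨
        i = 1 ∧ j = 2 ∧ k = 3 := by lia
  all_goals
    simp only [jacobiator, Fin.sum_univ_four, entry_diag, entry_swap 0 1, entry_swap 0 2,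
      entry_swap 0 3, entry_swap 1 2, entry_swap 1 3, entry_swap 2 3, pdC_entry_swap hP 0 2,
      pdC_entry_swap hP 0 3, pdC_entry_swap hP 1 3]
  · linear_combination h012 z hz
  · linear_combination h013 z hz
  · linear_combination h023 z hz
  · linear_combination h123 z hz

end Jacobiator

section Differentials

variable {g h g' h' K : ℝ → ℝ} {k : ℝ} {z : Fin 4 → ℝ}

/-- The differential of the `j`-th coordinate, as a complex-valued form. -/
noncomputable def coordDifferential (j : Fin 4) : (Fin 4 → ℝ) →L[ℝ] ℂ :=
  ofRealCLM ∘L ContinuousLinearMap.proj j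

theorem coordDifferential_single (i j : Fin 4) :
    coordDifferential j (Pi.single i 1) = if j = i then 1 else 0 := by
  simp only [coordDifferential, ContinuousLinearMap.comp_apply, ContinuousLinearMap.proj_apply,
    Pi.single_apply, ofRealCLM_apply]
  split_ifs <;> simp

theorem hasFDerivAt_coord (j : Fin 4) (z : Fin 4 → ℝ) :
    HasFDerivAt (fun w : Fin 4 → ℝ => (w j : ℂ)) (coordDifferential j) z :=
  (coordDifferential j).hasFDerivAt

theorem hasFDerivAt_ofReal_comp_coord {u : ℝ → ℝ} {u' : ℝ} {j : Fin 4}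
    (hu : HasDerivAt u u' (z j)) :
    HasFDerivAt (fun w : Fin 4 → ℝ => (u (w j) : ℂ)) ((u' : ℂ) • coordDifferential j) z := by
  have hproj : HasFDerivAt (fun w : Fin 4 → ℝ => w j) (ContinuousLinearMap.proj j) z :=
    hasFDerivAt_apply (𝕜 := ℝ) j z
  refine (hu.ofReal_comp.hasFDerivAt.comp z hproj).congr_fderiv ?_
  ext v
  simp [coordDifferential, mul_comm]

theorem pdC_eq_of_hasFDerivAt {f : (Fin 4 → ℝ) → ℂ} {d : Fin 4 → ℂ}
    (hf : HasFDerivAt f (∑ j, d j • coordDifferential j) z) (i : Fin 4) : pdC i f z = d i := by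
  rw [pdC, hf.fderiv]
  simp [coordDifferential_single]

/-- The square root `g(θ) p_θ − i h(θ) p_φ` of `F`, linear in the momenta; its `θ`-derivative is the
same expression in `g'` and `h'`. -/
noncomputable def linearMomentum (g h : ℝ → ℝ) (z : Fin 4 → ℝ) : ℂ :=
  (g (z 1) : ℂ) * (z 3 : ℂ) - I * (h (z 1) : ℂ) * (z 2 : ℂ)

/-- The exponential factor `α e^{iφ − K(θ)}` in the entries of `π′`. -/
noncomputable def expFactor (K : ℝ → ℝ) (α : ℂ) (z : Fin 4 → ℝ) : ℂ :=
  α * exp (I * (z 0 : ℂ) - (K (z 1) : ℂ))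

theorem hasFDerivAt_linearMomentum (hg : HasDerivAt g (g' (z 1)) (z 1))
    (hh : HasDerivAt h (h' (z 1)) (z 1)) :
    HasFDerivAt (linearMomentum g h)
      (linearMomentum g' h' z • coordDifferential 1 - (I * h (z 1)) • coordDifferential 2
        + (g (z 1) : ℂ) • coordDifferential 3) z := by
  refine (((hasFDerivAt_ofReal_comp_coord hg).mul (hasFDerivAt_coord 3 z)).sub
    (((hasFDerivAt_ofReal_comp_coord hh).const_mul I).mul
      (hasFDerivAt_coord 2 z))).congr_fderiv ?_
  ext v
  simp [linearMomentum]
  ring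

theorem hasFDerivAt_expFactor (α : ℂ) (hK : HasDerivAt K k (z 1)) :
    HasFDerivAt (expFactor K α)
      (expFactor K α z • (I • coordDifferential 0 - (k : ℂ) • coordDifferential 1)) z := by
  have hexp := (((hasFDerivAt_coord 0 z).const_mul I).fun_sub
    (hasFDerivAt_ofReal_comp_coord hK)).cexp.const_mul α
  rwa [smul_smul] at hexp

theorem Fgh_eq_linearMomentum_sq (g h : ℝ → ℝ) (z : Fin 4 → ℝ) :
    Fgh g h z = linearMomentum g h z ^ 2 :=
  rfl

theorem hasFDerivAt_Fgh (hg : HasDerivAt g (g' (z 1)) (z 1))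
    (hh : HasDerivAt h (h' (z 1)) (z 1)) :
    HasFDerivAt (Fgh g h)
      ((2 * linearMomentum g h z) • (linearMomentum g' h' z • coordDifferential 1
        - (I * h (z 1)) • coordDifferential 2 + (g (z 1) : ℂ) • coordDifferential 3)) z := by
  refine ((hasFDerivAt_linearMomentum hg hh).pow 2).congr_fderiv ?_
  simp only [Nat.add_one_sub_one, pow_one, nsmul_eq_mul, Nat.cast_ofNat]

theorem pdC_Fgh (hg : HasDerivAt g (g' (z 1)) (z 1)) (hh : HasDerivAt h (h' (z 1)) (z 1))
    (l : Fin 4) :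
    pdC l (Fgh g h) z =
      ![0,
        2 * linearMomentum g h z * linearMomentum g' h' z,
        -2 * I * h (z 1) * linearMomentum g h z,
        2 * g (z 1) * linearMomentum g h z] l := by
  refine pdC_eq_of_hasFDerivAt ((hasFDerivAt_Fgh hg hh).congr_fderiv ?_) l
  simp only [Fin.sum_univ_four, Matrix.cons_val]
  module

end Differentials

section Pencil

variable {g h K : ℝ → ℝ} {k : ℝ} {α s : ℂ} {z : Fin 4 → ℝ}

/-- The pencil `s P + π′` written without derivatives of `F`: with `q = g p_θ − i h p_φ` and
`E = α e^{iφ − K}`, its entries are polynomial in `s`, `q`, `∂q/∂θ`, `E`, `g`, `1/g` and `h/g`. -/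
noncomputable def gorPencil (g h K : ℝ → ℝ) (α s : ℂ) (z : Fin 4 → ℝ) :
    Matrix (Fin 4) (Fin 4) ℂ :=
  skewC
    (I * g (z 1) * linearMomentum g h z)
    (s + expFactor K α z)
    (-I * (linearMomentum g h z *
      (linearMomentum (deriv g) (deriv h) z + (h / g) (z 1) * linearMomentum g h z)))
    0
    (s + (Fgh g h z + expFactor K α z))
    (-I * (expFactor K α z * (g⁻¹ (z 1) * linearMomentum g h z)))

theorem smul_PcanC_add_skewC (s a b c d e f : ℂ) :
    s • PcanC + skewC a b c d e f = skewC a (s + b) c d (s + e) f := by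
  ext i j
  fin_cases i <;> fin_cases j <;> simp [PcanC, skewC, add_comm]

theorem smul_PcanC_add_piGor (K : ℝ → ℝ) (α s : ℂ)
    (hg : DifferentiableAt ℝ g (z 1)) (hh : DifferentiableAt ℝ h (z 1))
    (hg0 : g (z 1) ≠ 0) (hh0 : h (z 1) ≠ 0) :
    s • PcanC + piGor g h K α z = gorPencil g h K α s z := by
  have hgC : (g (z 1) : ℂ) ≠ 0 := ofReal_ne_zero.mpr hg0
  have hhC : (h (z 1) : ℂ) ≠ 0 := ofReal_ne_zero.mpr hh0
  rw [piGor, smul_PcanC_add_skewC, gorPencil, pdC_Fgh hg.hasDerivAt hh.hasDerivAt,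
    pdC_Fgh hg.hasDerivAt hh.hasDerivAt]
  congr 1
  · simp only [Matrix.cons_val, ofReal_div, ofReal_mul, ofReal_ofNat]
    field_simp
  · simp only [Matrix.cons_val, Fgh_eq_linearMomentum_sq, Pi.div_apply, ofReal_div, ofReal_mul,
      ofReal_ofNat]
    ring
  · simp only [linearMomentum, expFactor, ofReal_div, Pi.inv_apply, ofReal_inv]
    field_simp
    linear_combination (-α * h (z 1) * z 2) * I_sq

theorem gorPencil_transpose (g h K : ℝ → ℝ) (α s : ℂ) (z : Fin 4 → ℝ) :
    (gorPencil g h K α s z).transpose = -gorPencil g h K α s z := by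
  ext i j
  fin_cases i <;> fin_cases j <;> simp [gorPencil, skewC]

theorem pdC_gorPencil_zero_one (hg : DifferentiableAt ℝ g (z 1))
    (hh : DifferentiableAt ℝ h (z 1)) (l : Fin 4) :
    pdC l (gorPencil g h K α s · 0 1) z =
      ![0,
        I * (deriv g (z 1) * linearMomentum g h z
          + g (z 1) * linearMomentum (deriv g) (deriv h) z),
        g (z 1) * h (z 1),
        I * g (z 1) ^ 2] l := by
  have hentry := ((hasFDerivAt_ofReal_comp_coord hg.hasDerivAt).const_mul I).fun_mul
    (hasFDerivAt_linearMomentum hg.hasDerivAt hh.hasDerivAt)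
  refine pdC_eq_of_hasFDerivAt (hentry.congr_fderiv ?_) l
  simp only [Fin.sum_univ_four, Matrix.cons_val]
  match_scalars
  · ring
  · linear_combination (-g (z 1) * h (z 1)) * I_sq
  · ring
  · ring

theorem pdC_gorPencil_zero_two (hK : HasDerivAt K k (z 1)) (l : Fin 4) :
    pdC l (gorPencil g h K α s · 0 2) z =
      ![I * expFactor K α z, -k * expFactor K α z, 0, 0] l := by
  have hentry := (hasFDerivAt_expFactor α hK).const_add s
  refine pdC_eq_of_hasFDerivAt (hentry.congr_fderiv ?_) l
  simp only [Fin.sum_univ_four, Matrix.cons_val]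
  module

theorem pdC_gorPencil_zero_three (hg : DifferentiableAt ℝ g (z 1))
    (hh : DifferentiableAt ℝ h (z 1)) (hg' : DifferentiableAt ℝ (deriv g) (z 1))
    (hh' : DifferentiableAt ℝ (deriv h) (z 1)) (hg0 : g (z 1) ≠ 0) (l : Fin 4) :
    pdC l (gorPencil g h K α s · 0 3) z =
      ![0,
        -I * (linearMomentum g h z *
            (linearMomentum (deriv (deriv g)) (deriv (deriv h)) z
              + (h / g) (z 1) * linearMomentum (deriv g) (deriv h) z
              + deriv (h / g) (z 1) * linearMomentum g h z)
          + (linearMomentum (deriv g) (deriv h) z + (h / g) (z 1) * linearMomentum g h z) *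
            linearMomentum (deriv g) (deriv h) z),
        -I * (linearMomentum g h z * (-I * (deriv h (z 1) + (h / g) (z 1) * h (z 1)))
          + (linearMomentum (deriv g) (deriv h) z + (h / g) (z 1) * linearMomentum g h z) *
            (-I * h (z 1))),
        -I * (linearMomentum g h z * (deriv g (z 1) + (h / g) (z 1) * g (z 1))
          + (linearMomentum (deriv g) (deriv h) z + (h / g) (z 1) * linearMomentum g h z) *
            g (z 1))] l := by
  have hq := hasFDerivAt_linearMomentum hg.hasDerivAt hh.hasDerivAt
  have hq' := hasFDerivAt_linearMomentum hg'.hasDerivAt hh'.hasDerivAt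
  have hk := hasFDerivAt_ofReal_comp_coord (hh.div hg hg0).hasDerivAt
  have hentry := (hq.fun_mul (hq'.fun_add (hk.fun_mul hq))).const_mul (-I)
  refine pdC_eq_of_hasFDerivAt (hentry.congr_fderiv ?_) l
  simp only [Fin.sum_univ_four, Matrix.cons_val]
  module

theorem pdC_gorPencil_one_two (l : Fin 4) : pdC l (gorPencil g h K α s · 1 2) z = 0 := by
  have hentry : (gorPencil g h K α s · 1 2) = fun _ => 0 := rfl
  rw [hentry, pdC, fderiv_fun_const, Pi.zero_apply, zero_apply]

theorem pdC_gorPencil_one_three (hg : DifferentiableAt ℝ g (z 1))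
    (hh : DifferentiableAt ℝ h (z 1)) (hK : HasDerivAt K k (z 1)) (l : Fin 4) :
    pdC l (gorPencil g h K α s · 1 3) z =
      ![I * expFactor K α z,
        2 * linearMomentum g h z * linearMomentum (deriv g) (deriv h) z - k * expFactor K α z,
        -2 * I * h (z 1) * linearMomentum g h z,
        2 * g (z 1) * linearMomentum g h z] l := by
  have hentry := ((hasFDerivAt_Fgh hg.hasDerivAt hh.hasDerivAt).fun_add
    (hasFDerivAt_expFactor α hK)).const_add s
  refine pdC_eq_of_hasFDerivAt (hentry.congr_fderiv ?_) l
  simp only [Fin.sum_univ_four, Matrix.cons_val]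
  module

theorem pdC_gorPencil_two_three (hg : DifferentiableAt ℝ g (z 1))
    (hh : DifferentiableAt ℝ h (z 1)) (hg0 : g (z 1) ≠ 0) (hK : HasDerivAt K k (z 1))
    (l : Fin 4) :
    pdC l (gorPencil g h K α s · 2 3) z =
      ![expFactor K α z / g (z 1) * linearMomentum g h z,
        I * (expFactor K α z / g (z 1)) * ((k + deriv g (z 1) / g (z 1)) * linearMomentum g h z
          - linearMomentum (deriv g) (deriv h) z),
        -(expFactor K α z / g (z 1)) * h (z 1),
        -I * (expFactor K α z / g (z 1)) * g (z 1)] l := by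
  have hginv := hasFDerivAt_ofReal_comp_coord (hg.hasDerivAt.inv hg0)
  have hentry := ((hasFDerivAt_expFactor α hK).fun_mul
    (hginv.fun_mul (hasFDerivAt_linearMomentum hg.hasDerivAt hh.hasDerivAt))).const_mul (-I)
  refine pdC_eq_of_hasFDerivAt (hentry.congr_fderiv ?_) l
  simp only [Fin.sum_univ_four, Matrix.cons_val, Pi.inv_apply, ofReal_inv, ofReal_div, ofReal_neg,
    ofReal_pow]
  match_scalars
  · ring
  · linear_combination (expFactor K α z * h (z 1) / g (z 1)) * I_sq
  · ring
  · linear_combination (-expFactor K α z * linearMomentum g h z / g (z 1)) * I_sq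

theorem isPoissonOnC_gorPencil {U : Set ℝ} (α s : ℂ)
    (hg : ∀ t ∈ U, DifferentiableAt ℝ g t) (hh : ∀ t ∈ U, DifferentiableAt ℝ h t)
    (hg' : ∀ t ∈ U, DifferentiableAt ℝ (deriv g) t)
    (hh' : ∀ t ∈ U, DifferentiableAt ℝ (deriv h) t) (hg0 : ∀ t ∈ U, g t ≠ 0)
    (hK : ∀ t ∈ U, HasDerivAt K (h t / g t) t) :
    IsPoissonOnC (gorPencil g h K α s) {z | z 1 ∈ U} := by
  apply isPoissonOnC_of_transpose_eq_neg (gorPencil_transpose g h K α s) <;> intro z hz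
  all_goals
    have hgC : (g (z 1) : ℂ) ≠ 0 := ofReal_ne_zero.mpr (hg0 _ hz)
    simp only [pdC_gorPencil_zero_one (hg _ hz) (hh _ hz), pdC_gorPencil_zero_two (hK _ hz),
      pdC_gorPencil_zero_three (hg _ hz) (hh _ hz) (hg' _ hz) (hh' _ hz) (hg0 _ hz),
      pdC_gorPencil_one_two, pdC_gorPencil_one_three (hg _ hz) (hh _ hz) (hK _ hz),
      pdC_gorPencil_two_three (hg _ hz) (hh _ hz) (hg0 _ hz) (hK _ hz)]
    simp only [gorPencil, skewC, Matrix.of_apply, Matrix.cons_val, Fgh_eq_linearMomentum_sq,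
      Pi.div_apply, Pi.inv_apply, ofReal_div, ofReal_inv]
  · field_simp
    ring
  · field_simp
    ring
  · field_simp
    linear_combination (-expFactor K α z * h (z 1) * linearMomentum g h z ^ 2) * I_sq
  · field_simp
    ring

end Pencil

theorem statement7_general {U : Set ℝ} (hU : IsOpen U) (g h K : ℝ → ℝ) (α s : ℂ)
    (hg : ContDiffOn ℝ 2 g U) (hh : ContDiffOn ℝ 2 h U)
    (hg0 : ∀ t ∈ U, g t ≠ 0) (hh0 : ∀ t ∈ U, h t ≠ 0)
    (hK : ∀ t ∈ U, HasDerivAt K (h t / g t) t) :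
    IsPoissonOnC (fun z => s • PcanC + piGor g h K α z) {z | z 1 ∈ U} := by
  have differentiableAt {f : ℝ → ℝ} (hf : ContDiffOn ℝ 2 f U) (t) (ht : t ∈ U) :
      DifferentiableAt ℝ f t :=
    (hf.differentiableOn two_ne_zero).differentiableAt (hU.mem_nhds ht)
  have differentiableAt_deriv {f : ℝ → ℝ} (hf : ContDiffOn ℝ 2 f U) (t) (ht : t ∈ U) :
      DifferentiableAt ℝ (deriv f) t :=
    ((hf.deriv_of_isOpen hU one_add_one_eq_two.le).differentiableOn
      one_ne_zero).differentiableAt (hU.mem_nhds ht)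
  have isPoisson := isPoissonOnC_gorPencil α s (differentiableAt hg) (differentiableAt hh)
    (differentiableAt_deriv hg) (differentiableAt_deriv hh) hg0 hK
  refine isPoisson.congr (hU.preimage (continuous_apply 1)) fun z hz => ?_
  exact smul_PcanC_add_piGor K α s (differentiableAt hg _ hz) (differentiableAt hh _ hz)
    (hg0 _ hz) (hh0 _ hz)

theorem statement7 (c d : ℝ) (g h K : ℝ → ℝ) (α : ℂ)
    (hg : ContDiffOn ℝ (⊤ : ℕ∞) g (Set.Ioo c d)) (hh : ContDiffOn ℝ (⊤ : ℕ∞) h (Set.Ioo c d))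
    (hg0 : ∀ t ∈ Set.Ioo c d, g t ≠ 0) (hh0 : ∀ t ∈ Set.Ioo c d, h t ≠ 0)
    (hK : ∀ t ∈ Set.Ioo c d, HasDerivAt K (h t / g t) t) :
    IsPoissonOnC (piGor g h K α) {z | z 1 ∈ Set.Ioo c d} ∧
    IsPoissonOnC (fun z => PcanC + piGor g h K α z) {z | z 1 ∈ Set.Ioo c d} := by
  have pencil (s : ℂ) := statement7_general isOpen_Ioo g h K α s (contDiffOn_infty.mp hg 2)
    (contDiffOn_infty.mp hh 2) hg0 hh0 hK
  exact ⟨by simpa using pencil 0, by simpa using pencil 1⟩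
end

section
/- Let α ≠ 0 and a be real parameters and work on a domain where sin αθ cos αθ ≠ 0. Define Π₁₁ = p_θ² + p_φ²(4 + 3 cos²αθ/sin²αθ), Π₁₂ = Π₂₁ = 2 p_φ p_θ, Π₂₂ = p_θ² − p_φ² cos²αθ/sin²αθ, and Λ = (a/cos²αθ)·I₂. Set x₂₂ = y₁₂ = −cos αθ sin αθ/α and x₂₁ = y₁₁ = 0. Define the bivector π′ by {φ,θ}_{π′} = x₂₁ ∂Π₂₁/∂p_φ + x₂₂ ∂Π₂₂/∂p_φ − y₁₁ ∂Π₁₁/∂p_θ − y₁₂ ∂Π₁₂/∂p_θ, {q_i,p_j}_{π′} = Π_{ij} + Λ_{ij} (where (q₁,q₂,p₁,p₂) = (φ,θ,p_φ,p_θ)), and {p_φ,p_θ}_{π′} = (1/3)[(∂Π₁₁/∂θ − ∂Π₁₂/∂φ) p_φ + (∂Π₂₁/∂θ − ∂Π₂₂/∂φ) p_θ] + (∂Λ₁₁/∂θ − ∂Λ₁₂/∂φ) p_φ + (∂Λ₂₁/∂θ − ∂Λ₂₂/∂φ) p_θ. Then π′ is a Poisson bivector compatible with the canonical bivector P. -/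
open Real

/-- Partial derivative in the `i`-th coordinate direction on `ℝ⁴`
(coordinates `z 0 = φ`, `z 1 = θ`, `z 2 = p_φ`, `z 3 = p_θ`). -/
noncomputable def pd (i : Fin 4) (F : (Fin 4 → ℝ) → ℝ) (z : Fin 4 → ℝ) : ℝ :=
  fderiv ℝ F z (Pi.single i 1)

/-- The Poisson bracket of `F` and `G` defined by a bivector `π`. -/
noncomputable def pbiv (Pv : (Fin 4 → ℝ) → Matrix (Fin 4) (Fin 4) ℝ)
    (F G : (Fin 4 → ℝ) → ℝ) (z : Fin 4 → ℝ) : ℝ :=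
  ∑ i : Fin 4, ∑ j : Fin 4, Pv z i j * pd i F z * pd j G z

/-- A bivector `π` satisfies the Jacobi identity (is a Poisson bivector) on `U`. -/
def IsPoissonOn (Pv : (Fin 4 → ℝ) → Matrix (Fin 4) (Fin 4) ℝ)
    (U : Set (Fin 4 → ℝ)) : Prop :=
  ∀ z ∈ U, ∀ i j k : Fin 4,
    (∑ l : Fin 4, (Pv z l i * pd l (fun w => Pv w j k) z
      + Pv z l j * pd l (fun w => Pv w k i) z
      + Pv z l k * pd l (fun w => Pv w i j) z)) = 0

/-- The antisymmetric matrix with the given upper-triangular entries: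
`a = {φ,θ}`, `b = {φ,p_φ}`, `c = {φ,p_θ}`, `d = {θ,p_φ}`, `e = {θ,p_θ}`, `f = {p_φ,p_θ}`. -/
noncomputable def skew (a b c d e f : ℝ) : Matrix (Fin 4) (Fin 4) ℝ :=
  !![0, a, b, c; -a, 0, d, e; -b, -d, 0, f; -c, -e, -f, 0]

/-- The canonical Poisson bivector: `{φ,p_φ} = {θ,p_θ} = 1`, all other brackets zero. -/
noncomputable def Pcan : Matrix (Fin 4) (Fin 4) ℝ :=
  !![0, 0, 1, 0; 0, 0, 0, 1; -1, 0, 0, 0; 0, -1, 0, 0]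

noncomputable def Pi11 (α : ℝ) (z : Fin 4 → ℝ) : ℝ :=
  z 3 ^ 2 + z 2 ^ 2 * (4 + 3 * cos (α * z 1) ^ 2 / sin (α * z 1) ^ 2)

noncomputable def Pi12 (z : Fin 4 → ℝ) : ℝ := 2 * z 2 * z 3

noncomputable def Pi21 (z : Fin 4 → ℝ) : ℝ := 2 * z 2 * z 3

noncomputable def Pi22 (α : ℝ) (z : Fin 4 → ℝ) : ℝ :=
  z 3 ^ 2 - z 2 ^ 2 * cos (α * z 1) ^ 2 / sin (α * z 1) ^ 2

noncomputable def La11 (α a : ℝ) (z : Fin 4 → ℝ) : ℝ := a / cos (α * z 1) ^ 2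

noncomputable def La12 (z : Fin 4 → ℝ) : ℝ := 0

noncomputable def La21 (z : Fin 4 → ℝ) : ℝ := 0

noncomputable def La22 (α a : ℝ) (z : Fin 4 → ℝ) : ℝ := a / cos (α * z 1) ^ 2

/-- `x₂₂ = y₁₂ = −cos αθ sin αθ/α`. -/
noncomputable def x22y12 (α : ℝ) (z : Fin 4 → ℝ) : ℝ :=
  -(cos (α * z 1) * sin (α * z 1)) / α

/-- The natural Poisson bivector `π′` of the Goryachev–Chaplygin top:
`{φ,θ} = x₂₁ ∂Π₂₁/∂p_φ + x₂₂ ∂Π₂₂/∂p_φ − y₁₁ ∂Π₁₁/∂p_θ − y₁₂ ∂Π₁₂/∂p_θ`,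
`{q_i,p_j} = Π_{ij} + Λ_{ij}`,
`{p_φ,p_θ} = (1/3)[(∂Π₁₁/∂θ − ∂Π₁₂/∂φ) p_φ + (∂Π₂₁/∂θ − ∂Π₂₂/∂φ) p_θ]
  + (∂Λ₁₁/∂θ − ∂Λ₁₂/∂φ) p_φ + (∂Λ₂₁/∂θ − ∂Λ₂₂/∂φ) p_θ`, with `x₂₁ = y₁₁ = 0`. -/
noncomputable def piGC (α a : ℝ) (z : Fin 4 → ℝ) : Matrix (Fin 4) (Fin 4) ℝ :=
  skew
    (0 * pd 2 Pi21 z + x22y12 α z * pd 2 (Pi22 α) z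
      - 0 * pd 3 (Pi11 α) z - x22y12 α z * pd 3 Pi12 z)
    (Pi11 α z + La11 α a z)
    (Pi12 z + La12 z)
    (Pi21 z + La21 z)
    (Pi22 α z + La22 α a z)
    ((1 / 3) * ((pd 1 (Pi11 α) z - pd 0 Pi12 z) * z 2
        + (pd 1 Pi21 z - pd 0 (Pi22 α)  z) * z 3)
      + (pd 1 (La11 α a) z - pd 0 La12 z) * z 2
      + (pd 1 La21 z - pd 0 (La22 α a) z) * z 3)

/-!
Since `P` has constant coefficients, the Jacobi identity for `P + π'` is the one for `π'` together
with the linear condition `[P, π'] = 0`. With `B = cot (αθ) / α` and `κ = α²`, the bivector `π'`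
is polynomial in the momenta, `B`, `Λ₁₁` and `Λ₁₁'`. Its Schouten bracket with `P` vanishes
because of the Riccati equation `B' = -(1 + κB²)`, and its bracket with itself vanishes because, in
addition, `B Λ₁₁'' = (3 + κB²) Λ₁₁'`, an equation solved by
`Λ₁₁ = a / cos² (αθ)`.
-/

section PartialDerivatives

variable {F G : (Fin 4 → ℝ) → ℝ} {z : Fin 4 → ℝ}

theorem pd_const (i : Fin 4) (c : ℝ) (z : Fin 4 → ℝ) : pd i (fun _ => c) z = 0 := by
  simp [pd]

theorem pd_comp_apply {g : ℝ → ℝ} {g' : ℝ} {j : Fin 4} (hg : HasDerivAt g g' (z j)) (i : Fin 4) :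
    pd i (fun w => g (w j)) z = if j = i then g' else 0 := by
  have h := hg.comp_hasFDerivAt z
    (ContinuousLinearMap.proj (R := ℝ) (φ := fun _ : Fin 4 => ℝ) j).hasFDerivAt
  rw [pd, show (fun w : Fin 4 → ℝ => g (w j)) =
    g ∘ ContinuousLinearMap.proj (R := ℝ) (φ := fun _ : Fin 4 => ℝ) j from rfl, h.fderiv]
  simp [Pi.single_apply]

theorem pd_apply (i j : Fin 4) (z : Fin 4 → ℝ) :
    pd i (fun w => w j) z = if j = i then 1 else 0 :=
  pd_comp_apply (hasDerivAt_id (z j)) i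

theorem pd_neg (i : Fin 4) (F : (Fin 4 → ℝ) → ℝ) (z : Fin 4 → ℝ) :
    pd i (fun w => -F w) z = -pd i F z := by
  simp [pd]

theorem pd_const_add (i : Fin 4) (c : ℝ) (F : (Fin 4 → ℝ) → ℝ) (z : Fin 4 → ℝ) :
    pd i (fun w => c + F w) z = pd i F z := by
  simp [pd]

theorem pd_add (hF : DifferentiableAt ℝ F z) (hG : DifferentiableAt ℝ G z) (i : Fin 4) :
    pd i (fun w => F w + G w) z = pd i F z + pd i G z := by
  simp [pd, fderiv_fun_add hF hG]

theorem pd_sub (hF : DifferentiableAt ℝ F z) (hG : DifferentiableAt ℝ G z) (i : Fin 4) :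
    pd i (fun w => F w - G w) z = pd i F z - pd i G z := by
  simp [pd, fderiv_fun_sub hF hG]

theorem pd_mul (hF : DifferentiableAt ℝ F z) (hG : DifferentiableAt ℝ G z) (i : Fin 4) :
    pd i (fun w => F w * G w) z = F z * pd i G z + G z * pd i F z := by
  simp [pd, fderiv_fun_mul hF hG]

theorem pd_pow (hF : DifferentiableAt ℝ F z) (n : ℕ) (i : Fin 4) :
    pd i (fun w => F w ^ n) z = n * F z ^ (n - 1) * pd i F z := by
  simp [pd, fderiv_fun_pow n hF]

end PartialDerivatives

section Schouten

open scoped Matrix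

variable {Q R : (Fin 4 → ℝ) → Matrix (Fin 4) (Fin 4) ℝ} {U : Set (Fin 4 → ℝ)} {z : Fin 4 → ℝ}

/-- The part of the Schouten bracket of the bivectors `Q` and `R` in which `R` is differentiated:
the full bracket is `halfSchouten Q R + halfSchouten R Q`, and the Jacobi identity for `Q` says that
`halfSchouten Q Q` vanishes. -/
noncomputable def halfSchouten (Q R : (Fin 4 → ℝ) → Matrix (Fin 4) (Fin 4) ℝ)
    (z : Fin 4 → ℝ) (i j k : Fin 4) : ℝ :=
  ∑ l : Fin 4, (Q z l i * pd l (fun w => R w j k) z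
    + Q z l j * pd l (fun w => R w k i) z
    + Q z l k * pd l (fun w => R w i j) z)

theorem halfSchouten_rotate (Q R : (Fin 4 → ℝ) → Matrix (Fin 4) (Fin 4) ℝ)
    (z : Fin 4 → ℝ) (i j k : Fin 4) : halfSchouten Q R z j k i = halfSchouten Q R z i j k :=
  Finset.sum_congr rfl fun _ _ => by ring

theorem halfSchouten_swap (hR : ∀ w, (R w)ᵀ = -R w) (i j k : Fin 4) :
    halfSchouten Q R z j i k = -halfSchouten Q R z i j k := by
  have pd_swap (l m n : Fin 4) : pd l (fun w => R w n m) z = -pd l (fun w => R w m n) z := by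
    rw [← pd_neg]
    congr 1
    funext w
    exact congrFun₂ (hR w) m n
  rw [halfSchouten, halfSchouten, ← Finset.sum_neg_distrib]
  refine Finset.sum_congr rfl fun l _ => ?_
  rw [pd_swap l k i, pd_swap l j k, pd_swap l i j]
  ring

theorem eq_zero_of_alternating_of_lt {ι M : Type*} [LinearOrder ι] [AddCommGroup M]
    [IsAddTorsionFree M] {T : ι → ι → ι → M}
    (rotate : ∀ i j k, T j k i = T i j k) (swap : ∀ i j k, T j i k = -T i j k)
    (hlt : ∀ i j k, i < j → j < k → T i j k = 0) (i j k : ι) : T i j k = 0 := by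
  rcases lt_trichotomy i j with hij | hij | hij <;>
    rcases lt_trichotomy j k with hjk | hjk | hjk <;>
      rcases lt_trichotomy i k with hik | hik | hik <;>
        grind

theorem halfSchouten_eq_zero (hR : ∀ w, (R w)ᵀ = -R w)
    (h₀₁₂ : halfSchouten Q R z 0 1 2 = 0) (h₀₁₃ : halfSchouten Q R z 0 1 3 = 0)
    (h₀₂₃ : halfSchouten Q R z 0 2 3 = 0) (h₁₂₃ : halfSchouten Q R z 1 2 3 = 0)
    (i j k : Fin 4) : halfSchouten Q R z i j k = 0 := by
  refine eq_zero_of_alternating_of_lt (halfSchouten_rotate Q R z) (halfSchouten_swap hR)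
    (fun i j k hij hjk => ?_) i j k
  fin_cases i <;> fin_cases j <;> fin_cases k <;> first | assumption | simp at hij hjk

theorem halfSchouten_const_add (C : Matrix (Fin 4) (Fin 4) ℝ) (z : Fin 4 → ℝ) (i j k : Fin 4) :
    halfSchouten (fun w => C + R w) (fun w => C + R w) z i j k =
      halfSchouten (fun _ => C) R z i j k + halfSchouten R R z i j k := by
  simp only [halfSchouten, Matrix.add_apply, pd_const_add, ← Finset.sum_add_distrib]
  exact Finset.sum_congr rfl fun _ _ => by ring

theorem IsPoissonOn.const_add {C : Matrix (Fin 4) (Fin 4) ℝ} (hR : IsPoissonOn R U)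
    (hCR : ∀ z ∈ U, ∀ i j k, halfSchouten (fun _ => C) R z i j k = 0) :
    IsPoissonOn (fun z => C + R z) U := by
  intro z hz i j k
  have jacobi : halfSchouten R R z i j k = 0 := hR z hz i j k
  exact (halfSchouten_const_add C z i j k).trans (by rw [hCR z hz i j k, jacobi, add_zero])

theorem IsPoissonOn.congr (hQ : IsPoissonOn Q U) (hU : IsOpen U) (h : Set.EqOn R Q U) :
    IsPoissonOn R U := by
  intro z hz i j k
  have pd_eq (l m n : Fin 4) : pd l (fun w => R w m n) z = pd l (fun w => Q w m n) z := by
    have : (fun w => R w m n) =ᶠ[nhds z] fun w => Q w m n :=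
      (h.eventuallyEq_of_mem (hU.mem_nhds hz)).mono fun w hw => congrFun₂ hw m n
    rw [pd, pd, this.fderiv_eq]
  simp only [pd_eq, h hz]
  exact hQ z hz i j k

end Schouten

open scoped Matrix in
theorem transpose_skew (a b c d e f : ℝ) : (skew a b c d e f)ᵀ = -skew a b c d e f := by
  ext i j
  fin_cases i <;> fin_cases j <;> simp [skew]

section Riccati

open scoped Matrix

/-- The natural bivector with `{φ,θ} = 2 p_φ B`, `Π₁₁ = p_θ² + p_φ² (4 + 3 κ B²)`,
`Π₁₂ = Π₂₁ = 2 p_φ p_θ`, `Π₂₂ = p_θ² - p_φ² κ B²` and `Λ = l · I₂`, where `B`, `l` and `l'` are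
functions of `θ`. It is meant for `B' = -(1 + κ B²)` and for `l'` the derivative of `l`: then
`{p_φ,p_θ}` is `(1/3) (∂Π₁₁/∂θ) p_φ + l' p_φ`. The sign of `κ` separates the trigonometric,
rational and hyperbolic cases. -/
noncomputable def riccatiBivector (κ : ℝ) (B l l' : ℝ → ℝ) (z : Fin 4 → ℝ) :
    Matrix (Fin 4) (Fin 4) ℝ :=
  skew
    (2 * z 2 * B (z 1))
    (z 3 ^ 2 + z 2 ^ 2 * (4 + 3 * κ * B (z 1) ^ 2) + l (z 1))
    (2 * z 2 * z 3)
    (2 * z 2 * z 3)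
    (z 3 ^ 2 - z 2 ^ 2 * (κ * B (z 1) ^ 2) + l (z 1))
    (-2 * κ * z 2 ^ 3 * B (z 1) * (1 + κ * B (z 1) ^ 2) + z 2 * l' (z 1))

variable {κ l'' : ℝ} {B l l' : ℝ → ℝ} {z : Fin 4 → ℝ}

theorem transpose_riccatiBivector (κ : ℝ) (B l l' : ℝ → ℝ) (z : Fin 4 → ℝ) :
    (riccatiBivector κ B l l' z)ᵀ = -riccatiBivector κ B l l' z :=
  transpose_skew ..

theorem halfSchouten_Pcan_riccatiBivector
    (hB : HasDerivAt B (-(1 + κ * B (z 1) ^ 2)) (z 1))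
    (hl : HasDerivAt l (l' (z 1)) (z 1)) (hl' : DifferentiableAt ℝ l' (z 1)) (i j k : Fin 4) :
    halfSchouten (fun _ => Pcan) (riccatiBivector κ B l l') z i j k = 0 := by
  have dB := hB.differentiableAt
  have dl := hl.differentiableAt
  apply halfSchouten_eq_zero (transpose_riccatiBivector κ B l l') <;>
    simp (disch := fun_prop) only [halfSchouten, Fin.sum_univ_four, Pcan, riccatiBivector, skew,
      pd_const, pd_apply, pd_comp_apply hB, pd_comp_apply hl, pd_comp_apply hl'.hasDerivAt, pd_neg,
      pd_add, pd_sub, pd_mul, pd_pow, Matrix.of_apply,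
      Matrix.cons_val', Matrix.cons_val, Fin.reduceEq, reduceIte] <;>
    ring

theorem halfSchouten_riccatiBivector_self
    (hB : HasDerivAt B (-(1 + κ * B (z 1) ^ 2)) (z 1))
    (hl : HasDerivAt l (l' (z 1)) (z 1)) (hl' : HasDerivAt l' l'' (z 1))
    (ode : B (z 1) * l'' = (3 + κ * B (z 1) ^ 2) * l' (z 1)) (i j k : Fin 4) :
    halfSchouten (riccatiBivector κ B l l') (riccatiBivector κ B l l') z i j k = 0 := by
  have dB := hB.differentiableAt
  have dl := hl.differentiableAt
  have dl' := hl'.differentiableAt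
  apply halfSchouten_eq_zero (transpose_riccatiBivector κ B l l') <;>
    simp (disch := fun_prop) only [halfSchouten, Fin.sum_univ_four, riccatiBivector, skew,
      pd_const, pd_apply, pd_comp_apply hB, pd_comp_apply hl, pd_comp_apply hl', pd_neg,
      pd_add, pd_sub, pd_mul, pd_pow, Matrix.of_apply,
      Matrix.cons_val', Matrix.cons_val, Fin.reduceEq, reduceIte]
  · ring
  · ring
  · -- the only independent component in which `l''` occurs
    linear_combination (-2 * z 2 ^ 2) * ode
  · ring

end Riccati

section GoryachevChaplygin

variable {α a t : ℝ} {z : Fin 4 → ℝ}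

/-- The solution `cot (αθ) / α` of the Riccati equation `B' = -(1 + α² B²)`. -/
noncomputable def scaledCot (α t : ℝ) : ℝ := cot (α * t) / α

/-- The diagonal entry of `Λ` as a function of `θ` alone. -/
noncomputable def potential (α a t : ℝ) : ℝ := a / cos (α * t) ^ 2

/-- The derivative of `potential` in `θ`. -/
noncomputable def potentialDeriv (α a t : ℝ) : ℝ := 2 * a * α * sin (α * t) / cos (α * t) ^ 3

theorem hasDerivAt_cot (ht : sin t ≠ 0) : HasDerivAt cot (-(1 + cot t ^ 2)) t := by
  have h := (hasDerivAt_cos t).div (hasDerivAt_sin t) ht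
  rw [show cot = cos / sin from funext cot_eq_cos_div_sin]
  refine h.congr_deriv ?_
  simp only [Pi.div_apply]
  field_simp
  ring

theorem hasDerivAt_scaledCot (hα : α ≠ 0) (hs : sin (α * t) ≠ 0) :
    HasDerivAt (scaledCot α) (-(1 + α ^ 2 * scaledCot α t ^ 2)) t := by
  have h := ((hasDerivAt_cot hs).comp t (hasDerivAt_const_mul α)).div_const α
  refine h.congr_deriv ?_
  rw [scaledCot]
  field_simp

theorem hasDerivAt_cos_mul (α t : ℝ) :
    HasDerivAt (fun s => cos (α * s)) (-sin (α * t) * α) t :=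
  (hasDerivAt_cos (α * t)).comp t (hasDerivAt_const_mul α)

theorem hasDerivAt_potential (hc : cos (α * t) ≠ 0) :
    HasDerivAt (potential α a) (potentialDeriv α a t) t := by
  have h := (hasDerivAt_const t a).fun_div ((hasDerivAt_cos_mul α t).fun_pow 2) (pow_ne_zero 2 hc)
  refine h.congr_deriv ?_
  rw [potentialDeriv]
  field_simp
  ring

theorem hasDerivAt_potentialDeriv (hc : cos (α * t) ≠ 0) :
    HasDerivAt (potentialDeriv α a)
      (2 * a * α ^ 2 * (cos (α * t) ^ 2 + 3 * sin (α * t) ^ 2) / cos (α * t) ^ 4) t := by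
  have hsin : HasDerivAt (fun s => sin (α * s)) (cos (α * t) * α) t :=
    (hasDerivAt_sin (α * t)).comp t (hasDerivAt_const_mul α)
  have h := (hsin.const_mul (2 * a * α)).fun_div ((hasDerivAt_cos_mul α t).fun_pow 3)
    (pow_ne_zero 3 hc)
  refine h.congr_deriv ?_
  field_simp
  ring

theorem scaledCot_potentialDeriv_ode (hα : α ≠ 0) (hs : sin (α * t) ≠ 0)
    (hc : cos (α * t) ≠ 0) :
    scaledCot α t *
        (2 * a * α ^ 2 * (cos (α * t) ^ 2 + 3 * sin (α * t) ^ 2) / cos (α * t) ^ 4) =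
      (3 + α ^ 2 * scaledCot α t ^ 2) * potentialDeriv α a t := by
  rw [scaledCot, potentialDeriv, cot_eq_cos_div_sin]
  field_simp
  ring

theorem Pi11_eq_scaledCot (hα : α ≠ 0) :
    Pi11 α = fun w => w 3 ^ 2 + w 2 ^ 2 * (4 + 3 * α ^ 2 * scaledCot α (w 1) ^ 2) := by
  funext w
  rw [Pi11, scaledCot, cot_eq_cos_div_sin]
  field_simp

theorem Pi22_eq_scaledCot (hα : α ≠ 0) :
    Pi22 α = fun w => w 3 ^ 2 - w 2 ^ 2 * (α ^ 2 * scaledCot α (w 1) ^ 2) := by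
  funext w
  rw [Pi22, scaledCot, cot_eq_cos_div_sin]
  field_simp

theorem x22y12_mul_one_add_scaledCot_sq (hα : α ≠ 0) (hs : sin (α * z 1) ≠ 0) :
    x22y12 α z * (1 + α ^ 2 * scaledCot α (z 1) ^ 2) = -scaledCot α (z 1) := by
  rw [x22y12, scaledCot, cot_eq_cos_div_sin]
  field_simp
  linear_combination (-cos (α * z 1)) * sin_sq_add_cos_sq (α * z 1)

theorem piGC_eq_riccatiBivector (hα : α ≠ 0) (hs : sin (α * z 1) ≠ 0) (hc : cos (α * z 1) ≠ 0) :
    piGC α a z =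
      riccatiBivector (α ^ 2) (scaledCot α) (potential α a) (potentialDeriv α a) z := by
  have hB := hasDerivAt_scaledCot hα hs
  have dB := hB.differentiableAt
  have hl : HasDerivAt (potential α a) _ (z 1) := hasDerivAt_potential hc
  have La11_eq : La11 α a = fun w => potential α a (w 1) := rfl
  have La22_eq : La22 α a = fun w => potential α a (w 1) := rfl
  have Pi12_eq : Pi12 = fun w => 2 * w 2 * w 3 := rfl
  have Pi21_eq : Pi21 = fun w => 2 * w 2 * w 3 := rfl
  have La12_eq : La12 = fun _ => 0 := rfl
  have La21_eq : La21 = fun _ => 0 := rfl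
  rw [piGC, riccatiBivector, Pi11_eq_scaledCot hα, Pi22_eq_scaledCot hα,
    La11_eq, La22_eq, Pi12_eq, Pi21_eq, La12_eq, La21_eq]
  simp (disch := fun_prop) only [pd_const, pd_apply, pd_comp_apply hB, pd_comp_apply hl,
    pd_add, pd_sub, pd_mul, pd_pow, Fin.reduceEq, reduceIte]
  congr 1
  · linear_combination (-2 * z 2) * x22y12_mul_one_add_scaledCot_sq hα hs
  all_goals ring

theorem isOpen_setOf_sin_mul_cos_ne_zero (α : ℝ) :
    IsOpen {z : Fin 4 → ℝ | sin (α * z 1) * cos (α * z 1) ≠ 0} :=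
  isOpen_ne_fun (by fun_prop) (by fun_prop)

end GoryachevChaplygin

theorem statement16 (α a : ℝ) (hα : α ≠ 0) :
    IsPoissonOn (piGC α a) {z | sin (α * z 1) * cos (α * z 1) ≠ 0} ∧
    IsPoissonOn (fun z => Pcan + piGC α a z) {z | sin (α * z 1) * cos (α * z 1) ≠ 0} := by
  set U := {z : Fin 4 → ℝ | sin (α * z 1) * cos (α * z 1) ≠ 0}
  set N := riccatiBivector (α ^ 2) (scaledCot α) (potential α a) (potentialDeriv α a)
  have hU : IsOpen U := isOpen_setOf_sin_mul_cos_ne_zero α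
  have piGC_eqOn : Set.EqOn (piGC α a) N U := fun z hz =>
    piGC_eq_riccatiBivector hα (left_ne_zero_of_mul hz) (right_ne_zero_of_mul hz)
  have poisson : IsPoissonOn N U := fun z hz =>
    have hs : sin (α * z 1) ≠ 0 := left_ne_zero_of_mul hz
    have hc : cos (α * z 1) ≠ 0 := right_ne_zero_of_mul hz
    halfSchouten_riccatiBivector_self (hasDerivAt_scaledCot hα hs) (hasDerivAt_potential hc)
      (hasDerivAt_potentialDeriv hc) (scaledCot_potentialDeriv_ode hα hs hc)
  have compatible : ∀ z ∈ U, ∀ i j k, halfSchouten (fun _ => Pcan) N z i j k = 0 := fun z hz =>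
    halfSchouten_Pcan_riccatiBivector (hasDerivAt_scaledCot hα (left_ne_zero_of_mul hz))
      (hasDerivAt_potential (right_ne_zero_of_mul hz))
      (hasDerivAt_potentialDeriv (right_ne_zero_of_mul hz)).differentiableAt
  exact ⟨poisson.congr hU piGC_eqOn, (poisson.const_add compatible).congr hU fun z hz =>
    congrArg (Pcan + ·) (piGC_eqOn hz)⟩
end
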